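/- For α ∈ [0, 1/√2], define f(α) = 4α² − 1 and g(α) = √(1 − 16α⁴ + 8α²) (the expression under the square root is nonnegative on this range), and for r ∈ [0,1] define H(α,r) = |f(α) + r·g(α)| + |f(α) − r·g(α)|. Then sup over α ∈ [0, 1/√2] of H(α,r) equals max(2, 2√2·r); moreover this supremum is attained at α = 0 (with value 2) when r ≤ 1/√2, and at α = 1/2 (with value 2√2·r) when r ≥ 1/√2. -/

import Mathlib

/-- `f(α) = 4α² − 1`. -/
noncomputable def fOne (α : ℝ) : ℝ := 4 * α ^ 2 - 1

/-- `g(α) = √(1 − 16α⁴ + 8α²)`. -/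
noncomputable def gOne (α : ℝ) : ℝ := Real.sqrt (1 - 16 * α ^ 4 + 8 * α ^ 2)

/-- `H(α,r) = |f(α) + r·g(α)| + |f(α) − r·g(α)|`. -/
noncomputable def HFun (α r : ℝ) : ℝ :=
  |fOne α + r * gOne α| + |fOne α - r * gOne α|

/-!
Since `|a + b| + |a - b| = 2 max(|a|, |b|)`, we have `H = 2 max(|f|, |r| g)`. On `[0, 1/√2]` one has
`|f| ≤ 1`, and `g = √(2 - f²) ≤ √2`, so `H ≤ max(2, 2√2 |r|)`. At `α = 0`, where `f = -1` and
`g = 1`, the value is `2` as long as `|r| ≤ 1`; at `α = 1/2`, where `f = 0` and `g = √2`, it is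
`2√2 |r|`.
-/

theorem abs_add_add_abs_sub_eq_two_nsmul_max {G : Type*} [AddCommGroup G] [LinearOrder G]
    [IsOrderedAddMonoid G] (a b : G) : |a + b| + |a - b| = 2 • max |a| |b| := by
  rw [two_nsmul]
  grind

theorem fOne_zero : fOne 0 = -1 := by norm_num [fOne]

theorem fOne_half : fOne (1 / 2) = 0 := by norm_num [fOne]

theorem abs_fOne_le_one_iff {α : ℝ} : |fOne α| ≤ 1 ↔ |α| ≤ 1 / √2 := by
  have one_div_sqrt_two : 1 / √2 = √(1 / 2) := by rw [Real.sqrt_div zero_le_one, Real.sqrt_one]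
  rw [one_div_sqrt_two, Real.le_sqrt (abs_nonneg α) (by positivity), sq_abs, fOne, abs_le]
  constructor
  · rintro ⟨-, h⟩
    linarith
  · intro h
    constructor <;> linarith [sq_nonneg α]

theorem gOne_eq_sqrt_two_sub_fOne_sq (α : ℝ) : gOne α = √(2 - fOne α ^ 2) := by
  rw [gOne, fOne]
  ring_nf

theorem gOne_nonneg (α : ℝ) : 0 ≤ gOne α := Real.sqrt_nonneg _

theorem gOne_le_sqrt_two (α : ℝ) : gOne α ≤ √2 := by
  rw [gOne_eq_sqrt_two_sub_fOne_sq]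
  exact Real.sqrt_le_sqrt (sub_le_self _ (sq_nonneg _))

theorem HFun_eq_two_mul_max (α r : ℝ) : HFun α r = 2 * max |fOne α| (|r| * gOne α) := by
  rw [HFun, abs_add_add_abs_sub_eq_two_nsmul_max, nsmul_eq_mul, Nat.cast_ofNat, abs_mul,
    abs_of_nonneg (gOne_nonneg α)]

theorem HFun_zero_of_abs_le_one {r : ℝ} (hr : |r| ≤ 1) : HFun 0 r = 2 := by
  rw [HFun_eq_two_mul_max, gOne_eq_sqrt_two_sub_fOne_sq, fOne_zero]
  norm_num [hr]

theorem HFun_half (r : ℝ) : HFun (1 / 2) r = 2 * √2 * |r| := by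
  rw [HFun_eq_two_mul_max, gOne_eq_sqrt_two_sub_fOne_sq, fOne_half, abs_zero,
    zero_pow two_ne_zero, sub_zero, max_eq_right (by positivity)]
  ring

theorem HFun_le {α : ℝ} (hα : |α| ≤ 1 / √2) (r : ℝ) : HFun α r ≤ max 2 (2 * √2 * |r|) :=
  calc
    HFun α r = 2 * max |fOne α| (|r| * gOne α) := HFun_eq_two_mul_max α r
    _ ≤ 2 * max 1 (|r| * √2) := by
      gcongr
      exacts [abs_fOne_le_one_iff.2 hα, gOne_le_sqrt_two α]
    _ = max 2 (2 * √2 * |r|) := by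
      rw [mul_max_of_nonneg _ _ zero_le_two, mul_one, mul_comm |r|, mul_assoc]

theorem two_mul_sqrt_two_mul_le_two_iff {x : ℝ} : 2 * √2 * x ≤ 2 ↔ x ≤ 1 / √2 := by
  rw [le_div_iff₀' (by positivity), mul_assoc, mul_le_iff_le_one_right two_pos]

theorem two_le_two_mul_sqrt_two_mul_iff {x : ℝ} : 2 ≤ 2 * √2 * x ↔ 1 / √2 ≤ x := by
  rw [div_le_iff₀' (by positivity), mul_assoc, le_mul_iff_one_le_right two_pos]

theorem HFun_sup_two_peaks_general (r : ℝ) :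
    IsGreatest ((fun α => HFun α r) '' Set.Icc (0 : ℝ) (1 / √2)) (max 2 (2 * √2 * |r|))
    ∧ (|r| ≤ 1 / √2 → HFun 0 r = max 2 (2 * √2 * |r|) ∧ HFun 0 r = 2)
    ∧ (1 / √2 ≤ |r| →
        HFun (1 / 2) r = max 2 (2 * √2 * |r|) ∧ HFun (1 / 2) r = 2 * √2 * |r|) := by
  have one_div_le_one : 1 / √2 ≤ 1 :=
    div_le_one_of_le₀ Real.one_lt_sqrt_two.le (Real.sqrt_nonneg 2)
  have value_zero (h : |r| ≤ 1 / √2) : HFun 0 r = 2 :=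
    HFun_zero_of_abs_le_one (h.trans one_div_le_one)
  have peak_zero (h : |r| ≤ 1 / √2) : HFun 0 r = max 2 (2 * √2 * |r|) := by
    rw [value_zero h, max_eq_left (two_mul_sqrt_two_mul_le_two_iff.2 h)]
  have peak_half (h : 1 / √2 ≤ |r|) : HFun (1 / 2) r = max 2 (2 * √2 * |r|) := by
    rw [HFun_half, max_eq_right (two_le_two_mul_sqrt_two_mul_iff.2 h)]
  have half_le : 1 / 2 ≤ 1 / √2 :=
    one_div_le_one_div_of_le (by positivity) (Real.sqrt_two_lt_three_halves.trans (by norm_num)).le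
  refine ⟨⟨?attained, ?bound⟩, fun h => ⟨peak_zero h, value_zero h⟩,
    fun h => ⟨peak_half h, HFun_half r⟩⟩
  case attained =>
    rcases le_total |r| (1 / √2) with h | h
    · exact ⟨0, ⟨le_rfl, by positivity⟩, peak_zero h⟩
    · exact ⟨1 / 2, ⟨by positivity, half_le⟩, peak_half h⟩
  case bound =>
    rintro _ ⟨α, ⟨hα0, hα⟩, rfl⟩
    exact HFun_le ((abs_of_nonneg hα0).trans_le hα) r

theorem HFun_sup_two_peaks (r : ℝ) (hr0 : 0 ≤ r) (hr1 : r ≤ 1) :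
    sSup ((fun α => HFun α r) '' Set.Icc (0 : ℝ) (1 / Real.sqrt 2))
        = max 2 (2 * Real.sqrt 2 * r)
    ∧ (r ≤ 1 / Real.sqrt 2 →
        HFun 0 r = max 2 (2 * Real.sqrt 2 * r) ∧ HFun 0 r = 2)
    ∧ (1 / Real.sqrt 2 ≤ r →
        HFun (1 / 2) r = max 2 (2 * Real.sqrt 2 * r)
          ∧ HFun (1 / 2) r = 2 * Real.sqrt 2 * r) := by
  obtain ⟨greatest, peaks⟩ := abs_of_nonneg hr0 ▸ HFun_sup_two_peaks_general r
  exact ⟨greatest.csSup_eq, peaks⟩
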